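/- For every integer n ≥ 1, one has |B_n/B_{n−1} − e^{W(n)}| ≤ (8/7)·(1/W(n)). -/

import Mathlib

/-- Principal branch of the Lambert W function on `[0, ∞)`: for `x ≥ 0`,
`lambertW x` is the unique `y ≥ 0` with `y * exp y = x`. -/
noncomputable def lambertW (x : ℝ) : ℝ := Function.invFun (fun y : ℝ => y * Real.exp y) x

/-- Bell numbers: `Bell 0 = 1` and `Bell (n+1) = ∑_{k=0}^{n} C(n,k) * Bell k`. -/
def Bell : ℕ → ℕ
  | 0 => 1
  | n + 1 => ∑ k ∈ (Finset.range (n + 1)).attach, (n.choose k.1) * Bell k.1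
decreasing_by exact Finset.mem_range.mp k.2

/-!
Write `N = n`, `R = B_n / B_{n-1}` and `m = exp (W N)`, so that `log m = N / m`. Comparing `log R`
with `N / R` locates `R` relative to `m`: `log R ≤ N / R` gives `R ≤ m`, and
`N / R ≤ log R + c (1 / R + 1 / N)` gives `m - R ≤ c / W N`.

The first comparison follows from the log-concavity of `B_n / n!` (Bender and Canfield): the
recurrence bounds `B_n` by `B_{n-1}` times a partial sum of the exponential series at `N / R`.

For the second, with `c = 8 / 7`, Dobinski's formula makes `k ^ N / (e B_N k!)` a probability
distribution on `ℕ` whose moments are quotients of Bell numbers. The expected logarithm of the ratio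
of consecutive weights is at most `0`, and even at most `-1 / (2 V + 4 / 3)` with `V` the variance.
Estimating that logarithm by a combination of `1, k, 1 / k, 1 / k ^ 2` turns this into an inequality
between neighbouring ratios of Bell numbers, whose quotients are controlled by the log-concavity of
`B_n / n!` and the log-convexity of `B_n`; what remains is an inequality in `N` and `R` alone.
-/

open Finset Real

open scoped Nat

theorem lambertW_mul_exp {x : ℝ} (hx : 0 ≤ x) : lambertW x * exp (lambertW x) = x := by
  have hcont : ContinuousOn (fun y : ℝ => y * exp y) (Set.Icc 0 x) := by fun_prop
  have hx_mem : x ∈ Set.Icc (0 * exp 0) (x * exp x) :=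
    ⟨by simpa using hx, le_mul_of_one_le_right hx (one_le_exp hx)⟩
  obtain ⟨y, -, hy⟩ := intermediate_value_Icc hx hcont hx_mem
  exact Function.invFun_eq (f := fun y : ℝ => y * exp y) ⟨y, hy⟩

theorem lambertW_pos {x : ℝ} (hx : 0 < x) : 0 < lambertW x :=
  pos_of_mul_pos_left ((lambertW_mul_exp hx.le).symm ▸ hx) (exp_pos _).le

-- The two sides agree to third order at `t = 0`, hence the sign of `s ^ 3` in the derivative below.
theorem exp_neg_add_sq_div_six_le (t : ℝ) : exp (-(t + t ^ 2 / 6)) ≤ 1 - t + t ^ 2 / 3 := by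
  let f : ℝ → ℝ := fun s => (1 - s + s ^ 2 / 3) * exp (s + s ^ 2 / 6)
  have hf (s : ℝ) : HasDerivAt f (s ^ 3 / 9 * exp (s + s ^ 2 / 6)) s := by
    have hpoly : HasDerivAt (fun s : ℝ => 1 - s + s ^ 2 / 3) (-1 + 2 * s / 3) s := by
      simpa using ((hasDerivAt_id' s).const_sub 1).fun_add (((hasDerivAt_id' s).pow 2).div_const 3)
    have hexponent : HasDerivAt (fun s : ℝ => s + s ^ 2 / 6) (1 + 2 * s / 6) s := by
      simpa using (hasDerivAt_id' s).fun_add (((hasDerivAt_id' s).pow 2).div_const 6)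
    exact (hpoly.mul hexponent.exp).congr_deriv (by ring)
  have hdiff : Differentiable ℝ f := fun s => (hf s).differentiableAt
  have hmin : f 0 ≤ f t := by
    refine isMinOn_univ_of_deriv hdiff.continuous.continuousAt hdiff.differentiableOn
      hdiff.differentiableOn (fun s hs => ?_) (fun s hs => ?_) (Set.mem_univ t)
    · rw [(hf s).deriv]
      exact mul_nonpos_of_nonpos_of_nonneg
        (by linarith [Odd.pow_neg (n := 3) (by decide) (Set.mem_Iio.mp hs)]) (exp_pos _).le
    · rw [(hf s).deriv]
      have hs : 0 < s := hs
      positivity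
  rw [exp_neg, inv_le_iff_one_le_mul₀ (exp_pos _)]
  simpa [f] using hmin

theorem log_le_sub_one_div_three_add {z : ℝ} (hz : 0 < z) :
    log z ≤ (z - 1) / 3 + (1 - z⁻¹) - (1 - z⁻¹ ^ 2) / 6 := by
  let f : ℝ → ℝ := fun x => (x - 1) / 3 + (1 - x⁻¹) - (1 - x⁻¹ ^ 2) / 6 - log x
  have hf {x : ℝ} (hx : 0 < x) : HasDerivAt f ((x - 1) ^ 3 / (3 * x ^ 3)) x := by
    have hinv := hasDerivAt_inv hx.ne'
    refine (((((hasDerivAt_id x).sub_const 1).div_const 3).add (hinv.const_sub 1)).sub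
      (((hinv.pow 2).const_sub 1).div_const 6) |>.sub (hasDerivAt_log hx.ne')).congr_deriv ?_
    simp only [Nat.cast_ofNat, Nat.add_one_sub_one, pow_one]
    field_simp
    ring
  have hdiff {x : ℝ} (hx : 0 < x) : DifferentiableAt ℝ f x := (hf hx).differentiableAt
  have hmin : f 1 ≤ f z := by
    refine isMinOn_Ioi_of_deriv (hdiff one_pos).continuousAt
      (fun x hx => (hdiff hx.1).differentiableWithinAt)
      (fun x hx => (hdiff (one_pos.trans hx)).differentiableWithinAt)
      (fun x hx => ?_) (fun x hx => ?_) hz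
    · rw [(hf hx.1).deriv]
      have hx0 := hx.1
      exact div_nonpos_of_nonpos_of_nonneg
        (Odd.pow_nonpos (by decide) (by linarith [hx.2])) (by positivity)
    · have hx1 : 1 < x := hx
      rw [(hf (one_pos.trans hx1)).deriv]
      have := sub_pos.mpr hx1
      positivity
  simpa [f] using hmin

theorem sub_sq_div_two_le_log_one_add {x : ℝ} (hx : 0 ≤ x) : x - x ^ 2 / 2 ≤ log (1 + x) := by
  refine le_trans ?_ (le_log_one_add_of_nonneg hx)
  rw [le_div_iff₀ (by positivity)]
  nlinarith [pow_nonneg hx 3]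

theorem le_exp_lambertW {x r : ℝ} (hx : 0 < x) (hr : 0 < r) (h : log r ≤ x / r) :
    r ≤ exp (lambertW x) := by
  by_contra! hlt
  have hdiv : x / r < lambertW x := by
    rw [div_lt_iff₀ hr]
    calc x = lambertW x * exp (lambertW x) := (lambertW_mul_exp hx.le).symm
      _ < lambertW x * r := by gcongr; exact lambertW_pos hx
  linarith [(lt_log_iff_exp_lt hr).mpr hlt]

theorem exp_lambertW_sub_le {x r c : ℝ} (hx : 0 < x) (hr : 0 < r)
    (h : x / r ≤ log r + c * (r⁻¹ + x⁻¹)) :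
    exp (lambertW x) - r ≤ c * (1 / lambertW x) := by
  have hW := lambertW_pos hx
  set W := lambertW x
  set m := exp W with hm
  have hm₀ : 0 < m := exp_pos W
  have hx_eq : x = W * m := (lambertW_mul_exp hx.le).symm
  have hlog : log r - W ≤ r / m - 1 := by
    rw [← log_exp W, ← log_div hr.ne' hm₀.ne']
    exact log_le_sub_one_of_pos (div_pos hr hm₀)
  have hgap : (m - r) * ((W * m + r) / (r * m)) ≤ c * (1 / W) * ((W * m + r) / (r * m)) := by
    calc (m - r) * ((W * m + r) / (r * m)) = W * m / r - W + 1 - r / m := by field_simp; ring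
      _ ≤ c * (r⁻¹ + (W * m)⁻¹) := by rw [hx_eq] at h; linarith
      _ = c * (1 / W) * ((W * m + r) / (r * m)) := by field_simp
  exact le_of_mul_le_mul_right hgap (by positivity)

/- Jensen's inequality with a tilt: `g k ≤ exp (g k - s k) + s k - 1` with `s` quadratic and centred
at the mean. After weighting by `w k`, the exponential is at most `w (k + 1)` times a quadratic
polynomial in `k`, so an index shift turns its sum into moments of order at most two. -/
theorem le_add_sq_mul_of_mul_exp_le_succ {w g : ℕ → ℝ} {μ V L : ℝ} (hw : ∀ k, 0 ≤ w k)
    (hmass : HasSum w 1) (hmean : HasSum (fun k => w k * k) μ)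
    (hvar : HasSum (fun k => w k * (k - μ) ^ 2) V) (hL : HasSum (fun k => w k * g k) L)
    (hratio : ∀ k, w k * exp (g k) ≤ w (k + 1)) (c : ℝ) :
    L ≤ c + c ^ 2 * (V / 2 + 1 / 3) := by
  let t : ℝ → ℝ := fun x => c * (x - μ)
  let q : ℝ → ℝ := fun x => 1 - t x + t x ^ 2 / 3
  let s : ℝ → ℝ := fun x => t x + t x ^ 2 / 6
  have hq (x : ℝ) : 0 ≤ q x := (exp_pos _).le.trans (exp_neg_add_sq_div_six_le (t x))
  have hcentered : HasSum (fun k => w k * (k - μ)) 0 := by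
    simpa [mul_sub] using hmean.sub (hmass.mul_right μ)
  have hsum_q : HasSum (fun k : ℕ => w k * q (k - 1)) (1 + c + c ^ 2 / 3 + c ^ 2 / 3 * V) := by
    have h := (hmass.mul_left (1 + c + c ^ 2 / 3)).sub
      (hcentered.mul_left (c + 2 * c ^ 2 / 3)) |>.add (hvar.mul_left (c ^ 2 / 3))
    simpa only [mul_one, mul_zero, sub_zero] using h.congr_fun fun k => by simp only [q, t]; ring
  have hsum_s : HasSum (fun k : ℕ => w k * (s k - 1)) (c ^ 2 / 6 * V - 1) := by
    have h := (hcentered.mul_left c).add (hvar.mul_left (c ^ 2 / 6)) |>.sub hmass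
    simpa only [mul_zero, zero_add] using h.congr_fun fun k => by simp only [s, t]; ring
  have hsum_shift : HasSum (fun k : ℕ => w (k + 1) * q k)
      (1 + c + c ^ 2 / 3 + c ^ 2 / 3 * V - w 0 * q (-1)) := by
    simpa using (hasSum_nat_add_iff' 1).mpr hsum_q
  have hterm (k : ℕ) : w k * g k ≤ w (k + 1) * q k + w k * (s k - 1) := by
    have hexp : g k ≤ exp (g k) * exp (-s k) + (s k - 1) := by
      rw [← exp_add]
      linarith [add_one_le_exp (g k + -s k)]
    calc w k * g k ≤ w k * (exp (g k) * exp (-s k) + (s k - 1)) := by gcongr; exact hw k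
      _ = w k * exp (g k) * exp (-s k) + w k * (s k - 1) := by ring
      _ ≤ w (k + 1) * q k + w k * (s k - 1) := by
        gcongr
        · exact (mul_nonneg (hw k) (exp_pos _).le).trans (hratio k)
        · exact hratio k
        · exact exp_neg_add_sq_div_six_le (t k)
  have hboundary : 0 ≤ w 0 * q (-1) := mul_nonneg (hw 0) (hq _)
  have hsum_le := hasSum_le hterm hL (hsum_shift.add hsum_s)
  linarith

theorem le_neg_inv_of_mul_exp_le_succ {w g : ℕ → ℝ} {μ V L : ℝ} (hw : ∀ k, 0 ≤ w k)
    (hmass : HasSum w 1) (hmean : HasSum (fun k => w k * k) μ)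
    (hvar : HasSum (fun k => w k * (k - μ) ^ 2) V) (hL : HasSum (fun k => w k * g k) L)
    (hratio : ∀ k, w k * exp (g k) ≤ w (k + 1)) :
    L ≤ -(2 * V + 4 / 3)⁻¹ := by
  have hV : 0 ≤ V := hvar.nonneg fun k => mul_nonneg (hw k) (sq_nonneg _)
  refine (le_add_sq_mul_of_mul_exp_le_succ hw hmass hmean hvar hL hratio
    (-(V + 2 / 3)⁻¹)).trans_eq ?_
  field_simp
  ring

section LogConcavity

variable {𝕜 : Type*} [Field 𝕜] {b c : ℕ → 𝕜}

/-- The ratio `b (j - 1) / b j` of a sequence, with the convention `b (-1) = 0`. It is monotone when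
`b` is positive and log-concave, and the convention lets sums against it be reindexed without a
boundary term. -/
def prevRatio (b : ℕ → 𝕜) : ℕ → 𝕜
  | 0 => 0
  | j + 1 => b j / b (j + 1)

theorem sum_range_succ_mul_prevRatio (hb : ∀ j, b j ≠ 0) (u : ℕ → 𝕜) (n : ℕ) :
    ∑ j ∈ range (n + 1), b j * prevRatio b j * u j = ∑ j ∈ range n, b j * u (j + 1) := by
  rw [sum_range_succ']
  simp [prevRatio, mul_div_cancel₀, hb _]

theorem sum_range_mul_succ_of_recurrence
    (hrec : ∀ n : ℕ, (n + 1) * b (n + 1) = ∑ j ∈ range (n + 1), b j * c (n - j)) (n : ℕ) :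
    ∑ j ∈ range (n + 1), b j * c (n - j + 1) = (n + 2) * b (n + 2) - c 0 * b (n + 1) := by
  have hnext := hrec (n + 1)
  rw [sum_range_succ, Nat.sub_self] at hnext
  have hshift : ∑ j ∈ range (n + 1), b j * c (n + 1 - j) =
      ∑ j ∈ range (n + 1), b j * c (n - j + 1) :=
    sum_congr rfl fun j hj => by rw [Nat.sub_add_comm (mem_range_succ_iff.mp hj)]
  rw [← hshift]
  push_cast at hnext
  linear_combination -hnext

variable [LinearOrder 𝕜] [IsStrictOrderedRing 𝕜]

theorem antitone_succ_div_of_mul_le_sq (hc : ∀ i, 0 < c i)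
    (hcc : ∀ i, c i * c (i + 2) ≤ c (i + 1) ^ 2) : Antitone fun i => c (i + 1) / c i := by
  refine antitone_nat_of_succ_le fun i => ?_
  rw [div_le_div_iff₀ (hc _) (hc _)]
  linarith [hcc i]

theorem prevRatio_nonneg (hb : ∀ j, 0 < b j) : ∀ j, 0 ≤ prevRatio b j
  | 0 => le_rfl
  | j + 1 => (div_pos (hb j) (hb (j + 1))).le

theorem monotoneOn_prevRatio {m : ℕ} (hb : ∀ j, 0 < b j)
    (hlc : ∀ i < m, b i * b (i + 2) ≤ b (i + 1) ^ 2) :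
    MonotoneOn (prevRatio b) (Set.Iic (m + 1)) := by
  refine monotoneOn_of_le_add_one Set.ordConnected_Iic fun j _ _ hj => ?_
  cases j with
  | zero => exact prevRatio_nonneg hb 1
  | succ j =>
    simp only [prevRatio]
    rw [div_le_div_iff₀ (hb _) (hb _)]
    linarith [hlc j (by simpa using hj)]

theorem succ_le_mul_of_mul_le_sq {m : ℕ} {a : 𝕜} (hb : ∀ j, 0 < b j) (hb₁ : b 1 = a * b 0)
    (hlc : ∀ i < m, b i * b (i + 2) ≤ b (i + 1) ^ 2) : b (m + 1) ≤ a * b m := by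
  have hle : prevRatio b 1 ≤ prevRatio b (m + 1) :=
    monotoneOn_prevRatio hb hlc (by simp) (by simp) (by simp)
  simp only [prevRatio] at hle
  rw [div_le_div_iff₀ (hb _) (hb _), hb₁] at hle
  exact le_of_mul_le_mul_left (by linarith) (hb 0)

theorem sum_mul_sum_le_sum_mul_sum_of_monovaryOn {ι : Type*} {s : Finset ι} {x f g : ι → 𝕜}
    (hx : ∀ i ∈ s, 0 ≤ x i) (hfg : MonovaryOn f g s) :
    (∑ i ∈ s, x i * f i) * ∑ i ∈ s, x i * g i ≤ (∑ i ∈ s, x i) * ∑ i ∈ s, x i * (f i * g i) := by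
  have hpairs : 0 ≤ ∑ i ∈ s, ∑ j ∈ s, x i * x j * ((f j - f i) * (g j - g i)) :=
    sum_nonneg fun i hi => sum_nonneg fun j hj => mul_nonneg (mul_nonneg (hx i hi) (hx j hj))
      (monovaryOn_iff_forall_mul_nonneg.mp hfg hi hj)
  have hexpand : ∑ i ∈ s, ∑ j ∈ s, x i * x j * ((f j - f i) * (g j - g i)) =
      2 * ((∑ i ∈ s, x i) * ∑ i ∈ s, x i * (f i * g i) -
        (∑ i ∈ s, x i * f i) * ∑ i ∈ s, x i * g i) := by
    have hterm (i j : ι) : x i * x j * ((f j - f i) * (g j - g i)) =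
        x i * (x j * (f j * g j)) + x i * (f i * g i) * x j -
          (x i * f i * (x j * g j) + x i * g i * (x j * f j)) := by ring
    simp only [hterm, sum_sub_distrib, sum_add_distrib, ← sum_mul_sum]
    ring
  linarith

/- Bender and Canfield's argument: weight `j` by `x j = b j * c (k + 1 - j)`. The ratios
`b (j - 1) / b j` and `c (k + 2 - j) / c (k + 1 - j)` both increase with `j`, and the recurrence
evaluates all four sums in Chebyshev's inequality for them. -/
theorem mul_le_sq_step_of_recurrence (hb : ∀ n, 0 < b n) (hc : ∀ i, 0 < c i)
    (hcc : ∀ i, c i * c (i + 2) ≤ c (i + 1) ^ 2)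
    (hrec : ∀ n : ℕ, (n + 1) * b (n + 1) = ∑ j ∈ range (n + 1), b j * c (n - j)) {k : ℕ}
    (hlc : ∀ i < k + 1, b i * b (i + 2) ≤ b (i + 1) ^ 2) :
    b (k + 1) * b (k + 3) ≤ b (k + 2) ^ 2 := by
  let x : ℕ → 𝕜 := fun j => b j * c (k + 1 - j)
  let r : ℕ → 𝕜 := fun j => c (k + 1 - j + 1) / c (k + 1 - j)
  have hb₀ (j : ℕ) : b j ≠ 0 := (hb j).ne'
  have hr : MonotoneOn r (Set.Iio (k + 2)) := fun i _ j _ hij =>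
    antitone_succ_div_of_mul_le_sq hc hcc (Nat.sub_le_sub_left hij _)
  have hchebyshev := sum_mul_sum_le_sum_mul_sum_of_monovaryOn (s := range (k + 2)) (x := x)
    (f := prevRatio b) (g := r) (fun j _ => (mul_pos (hb _) (hc _)).le) (by
      rw [coe_range]
      exact ((monotoneOn_prevRatio hb hlc).mono Set.Iio_subset_Iic_self).monovaryOn hr)
  have hxr_eq (j : ℕ) : x j * r j = b j * c (k + 1 - j + 1) := by
    simp only [x, r, mul_assoc, mul_div_cancel₀ _ (hc (k + 1 - j)).ne']
  have hx : ∑ j ∈ range (k + 2), x j = (k + 2) * b (k + 2) := by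
    rw [← hrec]; push_cast; ring
  have hxf : ∑ j ∈ range (k + 2), x j * prevRatio b j = (k + 1) * b (k + 1) := by
    simp only [x, mul_right_comm (b _), sum_range_succ_mul_prevRatio hb₀, Nat.add_sub_add_right,
      hrec]
  have hxr : ∑ j ∈ range (k + 2), x j * r j = (k + 3) * b (k + 3) - c 0 * b (k + 2) := by
    simp only [hxr_eq, sum_range_mul_succ_of_recurrence hrec]
    push_cast; ring
  have hxfr : ∑ j ∈ range (k + 2), x j * (prevRatio b j * r j) =
      (k + 2) * b (k + 2) - c 0 * b (k + 1) := by
    simp only [mul_left_comm (x _), hxr_eq, mul_left_comm (prevRatio b _), ← mul_assoc,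
      sum_range_succ_mul_prevRatio hb₀, Nat.add_sub_add_right,
      sum_range_mul_succ_of_recurrence hrec]
  have hgrowth : b (k + 2) ≤ c 0 * b (k + 1) :=
    succ_le_mul_of_mul_le_sq hb (by simpa [mul_comm] using hrec 0) hlc
  rw [hx, hxf, hxr, hxfr] at hchebyshev
  refine le_of_mul_le_mul_left ?_ (by positivity : (0 : 𝕜) < (k + 1) * (k + 3))
  linarith [mul_le_mul_of_nonneg_left hgrowth (hb (k + 2)).le]

theorem mul_le_sq_of_recurrence (hb : ∀ n, 0 < b n) (hc : ∀ i, 0 < c i)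
    (hcc : ∀ i, c i * c (i + 2) ≤ c (i + 1) ^ 2) (hc₁ : c 1 ≤ c 0 ^ 2)
    (hrec : ∀ n : ℕ, (n + 1) * b (n + 1) = ∑ j ∈ range (n + 1), b j * c (n - j)) (n : ℕ) :
    b n * b (n + 2) ≤ b (n + 1) ^ 2 := by
  induction n using Nat.strong_induction_on with
  | _ n ih =>
    cases n with
    | succ k => exact mul_le_sq_step_of_recurrence hb hc hcc hrec ih
    | zero =>
      have h₁ := hrec 0
      have h₂ := hrec 1
      norm_num [sum_range_succ] at h₁ h₂ ⊢
      calc b 0 * b 2 = (b 0 ^ 2 * c 1 + (b 0 * c 0) ^ 2) / 2 := by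
            linear_combination b 0 * h₂ / 2 + b 0 * c 0 * h₁ / 2
        _ ≤ (b 0 ^ 2 * c 0 ^ 2 + (b 0 * c 0) ^ 2) / 2 := by gcongr
        _ = b 1 ^ 2 := by rw [h₁]; ring

end LogConcavity

theorem log_one_add_le_log_add_inv {R : ℝ} (hR : 0 < R) : log (1 + R) ≤ log R + R⁻¹ := by
  have hsplit : log (1 + R) = log R + log (1 + R⁻¹) := by
    rw [← log_mul hR.ne' (by positivity), mul_add, mul_one, mul_inv_cancel₀ hR.ne', add_comm]
  linarith [log_le_sub_one_of_pos (show 0 < 1 + R⁻¹ by positivity)]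

theorem div_le_log_add_of_le_three {N R : ℝ} (hN : 0 < N) (hR : 0 < R) (hR₃ : R ≤ 3)
    (h : N / R ≤ (1 + 1 / (2 * R)) * log (1 + R)) :
    N / R ≤ log R + 8 / 7 * (R⁻¹ + N⁻¹) := by
  have hT_le_log := log_one_add_le_log_add_inv hR
  have hT_le_R : log (1 + R) ≤ R := by
    linarith [log_le_sub_one_of_pos (show 0 < 1 + R by linarith)]
  have hT_le : log (1 + R) ≤ 1.3864 := by
    have h₄ : log (1 + R) ≤ log (2 ^ 2) := log_le_log (by linarith) (by linarith)
    rw [log_pow, Nat.cast_ofNat] at h₄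
    linarith [log_two_lt_d9]
  set T := log (1 + R)
  set y := N / R with hy
  have hy₀ : 0 < y := div_pos hN hR
  have hsplit : (1 + 1 / (2 * R)) * T = T + T / (2 * R) := by ring
  have hy_le : y ≤ T + 1 / 2 := by
    have : T / (2 * R) ≤ 1 / 2 := by rw [div_le_div_iff₀ (by positivity) two_pos]; linarith
    linarith
  have hprod : y * (7 * T - 2) ≤ 16 := by nlinarith
  have hhalf : T / (2 * R) ≤ R⁻¹ / 7 + 8 / 7 * N⁻¹ := by
    calc T / (2 * R) = (2 * y + y * (7 * T - 2)) / (14 * y * R) := by field_simp; ring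
      _ ≤ (2 * y + 16) / (14 * y * R) := by gcongr
      _ = R⁻¹ / 7 + 8 / 7 * N⁻¹ := by rw [hy]; field_simp; ring
  linarith

theorem cube_div_three_add_half_le {R y : ℝ} (hR : 0 ≤ R) (hy : 0 ≤ y)
    (hyR : y ≤ 7 / 6 * log (1 + R)) :
    y ^ 3 / 3 + y / 2 ≤ R * (y / 7 + 7 / 12) := by
  set T := log (1 + R) with hT
  have hT₀ : 0 ≤ T := log_nonneg (by linarith)
  have hR_ge : T + T ^ 2 / 2 + T ^ 3 / 6 + T ^ 4 / 24 ≤ R := by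
    have h := sum_le_exp_of_nonneg hT₀ 5
    rw [hT, exp_log (by linarith), ← hT] at h
    norm_num [sum_range_succ, Nat.factorial] at h
    linarith
  have hcubic : 0 ≤ T ^ 3 + 15 / 2 * T ^ 2 - 452 / 9 * T + 66 := by
    nlinarith [mul_nonneg (sq_nonneg (T - 23 / 10)) (by linarith : 0 ≤ T + 121 / 10)]
  have hendpoint : (7 / 6 * T) * ((7 / 6 * T) ^ 2 / 3 + 1 / 2) ≤ R * (T / 6 + 7 / 12) := by
    have h := mul_le_mul_of_nonneg_right hR_ge (by positivity : 0 ≤ T / 6 + 7 / 12)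
    nlinarith [mul_nonneg (sq_nonneg T) hcubic]
  -- The left side is linear in `y`, so only the endpoints of `[0, 7 / 6 * T]` matter.
  have hslope : y * ((7 / 6 * T) ^ 2 / 3 + 1 / 2 - R / 7) ≤ 7 / 12 * R := by
    rcases le_total ((7 / 6 * T) ^ 2 / 3 + 1 / 2 - R / 7) 0 with hneg | hpos
    · linarith [mul_nonpos_of_nonneg_of_nonpos hy hneg]
    · linarith [mul_le_mul_of_nonneg_right hyR hpos]
  calc y ^ 3 / 3 + y / 2 = y * (y ^ 2 / 3 + 1 / 2) := by ring
    _ ≤ y * ((7 / 6 * T) ^ 2 / 3 + 1 / 2) := by gcongr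
    _ ≤ R * (y / 7 + 7 / 12) := by linarith

theorem div_le_log_add_of_three_le {N R : ℝ} (hN : 4 ≤ N) (hR : 3 ≤ R)
    (hcrude : N / R ≤ (1 + 1 / (2 * R)) * log (1 + R))
    (h : N / R ≤ log R + R⁻¹ + N / (2 * R ^ 2) + N⁻¹ / 3 + (N - 1)⁻¹ / 6 -
      (2 * (R ^ 2 * ((N + 1) / N ^ 2)) + 4 / 3)⁻¹) :
    N / R ≤ log R + 8 / 7 * (R⁻¹ + N⁻¹) := by
  have hR₀ : 0 < R := by linarith
  have hN₀ : 0 < N := by linarith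
  have hpred : (N - 1)⁻¹ / 6 ≤ N⁻¹ * (2 / 9) := by
    have : (N - 1)⁻¹ ≤ N⁻¹ * (4 / 3) := by
      rw [← div_eq_inv_mul, inv_le_comm₀ (by linarith) (by positivity), inv_div]
      linarith
    linarith
  have hinv : N / (2 * R ^ 2) - (1 / (2 * R ^ 2) + N ^ 2 / (3 * R ^ 4)) ≤
      (2 * (R ^ 2 * ((N + 1) / N ^ 2)) + 4 / 3)⁻¹ := by
    rw [← one_div, le_div_iff₀ (by positivity)]
    have hsq : (N / (2 * R ^ 2) - (1 / (2 * R ^ 2) + N ^ 2 / (3 * R ^ 4))) *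
        (2 * (R ^ 2 * ((N + 1) / N ^ 2)) + 4 / 3) = 1 - (1 / N + 2 * N / (3 * R ^ 2)) ^ 2 := by
      field_simp
      ring
    linarith [sq_nonneg (1 / N + 2 * N / (3 * R ^ 2))]
  have hcoarse : N / R ≤ 7 / 6 * log (1 + R) := by
    refine hcrude.trans (mul_le_mul_of_nonneg_right ?_ (log_nonneg (by linarith)))
    have : 1 / (2 * R) ≤ 1 / (2 * 3) := by gcongr
    linarith
  have herror : 1 / (2 * R ^ 2) + N ^ 2 / (3 * R ^ 4) ≤ R⁻¹ / 7 + N⁻¹ * (7 / 12) := by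
    have hcube := cube_div_three_add_half_le hR₀.le (by positivity) hcoarse
    calc 1 / (2 * R ^ 2) + N ^ 2 / (3 * R ^ 4)
        = ((N / R) ^ 3 / 3 + N / R / 2) / (N * R) := by field_simp; ring
      _ ≤ R * (N / R / 7 + 7 / 12) / (N * R) := by gcongr
      _ = R⁻¹ / 7 + N⁻¹ * (7 / 12) := by field_simp
  linarith [inv_pos.mpr hN₀]

namespace Bell

theorem succ_eq_sum (n : ℕ) : Bell (n + 1) = ∑ k ∈ range (n + 1), n.choose k * Bell k := by
  rw [Bell, sum_attach (range (n + 1)) fun k => n.choose k * Bell k]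

theorem pos (n : ℕ) : 0 < Bell n := by
  induction n using Nat.strong_induction_on with
  | _ n ih =>
    cases n with
    | zero => simp [Bell]
    | succ n =>
      rw [succ_eq_sum]
      exact sum_pos (fun k hk => Nat.mul_pos (Nat.choose_pos (mem_range_succ_iff.mp hk))
        (ih k (mem_range.mp hk))) (by simp)

theorem cast_pos (n : ℕ) : (0 : ℝ) < Bell n := Nat.cast_pos.mpr (pos n)

/-- The ratio `B_{n+1} / B_n` of consecutive Bell numbers; the index is that of the denominator. -/
noncomputable def ratio (n : ℕ) : ℝ := Bell (n + 1) / Bell n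

theorem ratio_pos (n : ℕ) : 0 < ratio n := div_pos (cast_pos _) (cast_pos _)

theorem cast_succ_eq_ratio_mul (n : ℕ) : (Bell (n + 1) : ℝ) = ratio n * Bell n :=
  (div_mul_cancel₀ _ (cast_pos n).ne').symm

/-- The coefficient `B_n / n!` of the exponential generating function `exp (exp x - 1)` of the Bell
numbers. -/
noncomputable def egfCoeff (n : ℕ) : ℝ := Bell n / n !

theorem egfCoeff_pos (n : ℕ) : 0 < egfCoeff n := div_pos (cast_pos n) (by positivity)

theorem egfCoeff_succ (n : ℕ) :
    (n + 1) * egfCoeff (n + 1) = ∑ j ∈ range (n + 1), egfCoeff j * ((n - j)! : ℝ)⁻¹ := by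
  have hfactorial : (n + 1) * egfCoeff (n + 1) = Bell (n + 1) / n ! := by
    rw [egfCoeff, Nat.factorial_succ]
    push_cast
    field_simp
  rw [hfactorial, succ_eq_sum, Nat.cast_sum, sum_div]
  refine sum_congr rfl fun j hj => ?_
  rw [Nat.cast_mul, Nat.cast_choose ℝ (mem_range_succ_iff.mp hj), egfCoeff]
  field_simp

theorem egfCoeff_mul_le_sq (n : ℕ) : egfCoeff n * egfCoeff (n + 2) ≤ egfCoeff (n + 1) ^ 2 := by
  refine mul_le_sq_of_recurrence (c := fun i => (i ! : ℝ)⁻¹) egfCoeff_pos (fun i => by positivity)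
    (fun i => ?_) (by simp) egfCoeff_succ n
  rw [← mul_inv, inv_pow]
  gcongr
  norm_cast
  rw [Nat.factorial_succ (i + 1), Nat.factorial_succ i]
  nlinarith [sq_nonneg (i !)]

theorem egfCoeff_div_succ (n : ℕ) : egfCoeff n / egfCoeff (n + 1) = (n + 1) / ratio n := by
  have hn := cast_pos n
  have hn' := cast_pos (n + 1)
  rw [egfCoeff, egfCoeff, ratio, Nat.factorial_succ]
  push_cast
  field_simp

theorem monotone_succ_div_ratio : Monotone fun n : ℕ => (n + 1) / ratio n :=
  monotone_nat_of_le_succ fun n => by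
    have h : egfCoeff n / egfCoeff (n + 1) ≤ egfCoeff (n + 1) / egfCoeff (n + 2) := by
      rw [div_le_div_iff₀ (egfCoeff_pos _) (egfCoeff_pos _), ← sq]
      exact egfCoeff_mul_le_sq n
    simpa only [egfCoeff_div_succ] using h

theorem egfCoeff_le_pow_mul {j n : ℕ} (hjn : j ≤ n) :
    egfCoeff j ≤ ((n + 1) / ratio n) ^ (n - j) * egfCoeff n := by
  have hstep {m : ℕ} (hm : m ≤ n) : egfCoeff m ≤ (n + 1) / ratio n * egfCoeff (m + 1) := by
    rw [← div_le_iff₀ (egfCoeff_pos _), egfCoeff_div_succ]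
    exact monotone_succ_div_ratio hm
  have hgeom := le_geom (u := fun i => egfCoeff (n - i))
    (div_pos n.cast_add_one_pos (ratio_pos n)).le (n - j) fun i hi => by
      rw [show n - i = n - (i + 1) + 1 by lia]
      exact hstep (Nat.sub_le _ _)
  simpa only [Nat.sub_sub_self hjn, Nat.sub_zero] using hgeom

theorem ratio_le_exp (n : ℕ) : ratio n ≤ exp ((n + 1) / ratio n) := by
  have hratio : (n + 1) * egfCoeff (n + 1) = ratio n * egfCoeff n := by
    have h := egfCoeff_div_succ n
    rw [div_eq_div_iff (egfCoeff_pos _).ne' (ratio_pos n).ne'] at h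
    linarith
  refine le_of_mul_le_mul_right ?_ (egfCoeff_pos n)
  calc ratio n * egfCoeff n = ∑ j ∈ range (n + 1), egfCoeff j * ((n - j)! : ℝ)⁻¹ := by
        rw [← hratio, egfCoeff_succ]
    _ ≤ ∑ j ∈ range (n + 1), ((n + 1) / ratio n) ^ (n - j) * egfCoeff n * ((n - j)! : ℝ)⁻¹ := by
        gcongr with j hj
        exact egfCoeff_le_pow_mul (mem_range_succ_iff.mp hj)
    _ = (∑ i ∈ range (n + 1), ((n + 1) / ratio n) ^ i / i !) * egfCoeff n := by
        rw [← sum_flip fun i => ((n + 1) / ratio n) ^ i / (i ! : ℝ), sum_mul]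
        exact sum_congr rfl fun j _ => by ring
    _ ≤ exp ((n + 1) / ratio n) * egfCoeff n := by
        gcongr
        · exact (egfCoeff_pos n).le
        · exact sum_le_exp_of_nonneg (div_pos n.cast_add_one_pos (ratio_pos n)).le _

theorem ratio_le_add_one (n : ℕ) : ratio n ≤ n + 1 := by
  have h := monotone_succ_div_ratio n.zero_le
  have hratio_zero : ratio 0 = 1 := by simp [ratio, succ_eq_sum, Bell]
  simp only [Nat.cast_zero, hratio_zero, zero_add, div_one] at h
  exact (one_le_div (ratio_pos n)).mp h

theorem hasSum_pow_div_factorial (n : ℕ) :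
    HasSum (fun k : ℕ => (k : ℝ) ^ n / k !) (exp 1 * Bell n) := by
  induction n using Nat.strong_induction_on with
  | _ n ih =>
    cases n with
    | zero => simpa [Bell, exp_eq_exp_ℝ] using NormedSpace.expSeries_div_hasSum_exp (1 : ℝ)
    | succ n =>
      have hbinomial : HasSum
          (fun k : ℕ => ∑ j ∈ range (n + 1), (n.choose j : ℝ) * ((k : ℝ) ^ j / k !))
          (∑ j ∈ range (n + 1), (n.choose j : ℝ) * (exp 1 * Bell j)) :=
        hasSum_sum fun j hj => (ih j (mem_range.mp hj)).mul_left _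
      have hterm (k : ℕ) : ((k + 1 : ℕ) : ℝ) ^ (n + 1) / (k + 1)! =
          ∑ j ∈ range (n + 1), (n.choose j : ℝ) * ((k : ℝ) ^ j / k !) := by
        have hcancel : ((k + 1 : ℕ) : ℝ) ^ (n + 1) / (k + 1)! = ((k : ℝ) + 1) ^ n / k ! := by
          rw [Nat.factorial_succ]
          push_cast
          rw [pow_succ', mul_div_mul_left _ _ k.cast_add_one_ne_zero]
        rw [hcancel, add_pow, sum_div]
        exact sum_congr rfl fun j _ => by ring
      have hvalue : exp 1 * (Bell (n + 1) : ℝ) =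
          ∑ j ∈ range (n + 1), (n.choose j : ℝ) * (exp 1 * Bell j) := by
        rw [succ_eq_sum, Nat.cast_sum, mul_sum]
        exact sum_congr rfl fun j _ => by push_cast; ring
      rw [← hasSum_nat_add_iff' 1, hvalue]
      simpa only [hterm, range_one, sum_singleton, Nat.cast_zero, zero_pow n.succ_ne_zero, zero_div,
        sub_zero] using hbinomial

/-- The weight `k ^ n / (e B_n k!)` of `k`. By Dobinski's formula these weights form a probability
distribution on `ℕ`, whose `j`-th moment is `B_{n+j} / B_n`. -/
noncomputable def dobinskiWeight (n k : ℕ) : ℝ := (k : ℝ) ^ n / k ! / (exp 1 * Bell n)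

theorem dobinskiWeight_nonneg (n k : ℕ) : 0 ≤ dobinskiWeight n k := by
  unfold dobinskiWeight
  positivity

theorem hasSum_dobinskiWeight_mul_pow (n j : ℕ) :
    HasSum (fun k => dobinskiWeight n k * (k : ℝ) ^ j) (Bell (n + j) / Bell n) := by
  have h := (hasSum_pow_div_factorial (n + j)).div_const (exp 1 * Bell n)
  rw [mul_div_mul_left _ _ (exp_pos 1).ne'] at h
  exact h.congr_fun fun k => by rw [dobinskiWeight]; ring

theorem hasSum_dobinskiWeight (n : ℕ) : HasSum (dobinskiWeight n) 1 := by
  simpa [(cast_pos n).ne'] using hasSum_dobinskiWeight_mul_pow n 0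

theorem hasSum_dobinskiWeight_mul (n : ℕ) :
    HasSum (fun k => dobinskiWeight n k * k) (ratio n) := by
  simpa only [pow_one, ratio] using hasSum_dobinskiWeight_mul_pow n 1

theorem hasSum_dobinskiWeight_mul_sub_sq (n : ℕ) :
    HasSum (fun k => dobinskiWeight n k * (k - ratio n) ^ 2)
      (ratio n * (ratio (n + 1) - ratio n)) := by
  have hsecond : (Bell (n + 2) : ℝ) / Bell n = ratio (n + 1) * ratio n := by
    rw [cast_succ_eq_ratio_mul (n + 1), cast_succ_eq_ratio_mul n, ← mul_assoc,
      mul_div_cancel_right₀ _ (cast_pos n).ne']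
  have h := (hasSum_dobinskiWeight_mul_pow n 2).add
    ((hasSum_dobinskiWeight_mul n).mul_left (-2 * ratio n)) |>.add
    ((hasSum_dobinskiWeight n).mul_left (ratio n ^ 2))
  rw [hsecond] at h
  convert h.congr_fun fun k => ?_ using 1 <;> ring

theorem hasSum_dobinskiWeight_mul_inv_pow {n : ℕ} (hn : n ≠ 0) (j : ℕ) :
    HasSum (fun k => dobinskiWeight (n + j) k * ((k : ℝ)⁻¹) ^ j) (Bell n / Bell (n + j)) := by
  have h := (hasSum_pow_div_factorial n).div_const (exp 1 * Bell (n + j))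
  rw [mul_div_mul_left _ _ (exp_pos 1).ne'] at h
  refine h.congr_fun fun k => ?_
  rcases eq_or_ne (k : ℝ) 0 with hk | hk
  · simp [dobinskiWeight, hk, hn]
  · rw [dobinskiWeight, pow_add, inv_pow]
    field_simp

theorem monotone_ratio : Monotone ratio :=
  monotone_nat_of_le_succ fun n => by
    have hvar := (hasSum_dobinskiWeight_mul_sub_sq n).nonneg
      fun k => mul_nonneg (dobinskiWeight_nonneg n k) (sq_nonneg _)
    exact sub_nonneg.mp (nonneg_of_mul_nonneg_right hvar (ratio_pos n))

theorem cast_le_ratio_pow_mul {j n : ℕ} (hjn : j ≤ n) :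
    (Bell n : ℝ) ≤ ratio n ^ (n - j) * Bell j := by
  have hgeom := le_geom (u := fun i => (Bell (j + i) : ℝ)) (ratio_pos n).le (n - j)
    fun i hi => by
      rw [← add_assoc, cast_succ_eq_ratio_mul]
      gcongr
      exact monotone_ratio (by lia)
  simpa only [Nat.add_sub_cancel' hjn, add_zero] using hgeom

theorem one_add_inv_ratio_pow_le (n : ℕ) : (1 + (ratio n)⁻¹) ^ n ≤ ratio n := by
  refine le_of_mul_le_mul_right ?_ (cast_pos n)
  calc (1 + (ratio n)⁻¹) ^ n * Bell n
      = ∑ j ∈ range (n + 1), n.choose j * ((ratio n)⁻¹ ^ (n - j) * Bell n) := by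
        rw [add_pow, sum_mul]
        exact sum_congr rfl fun j _ => by ring
    _ ≤ ∑ j ∈ range (n + 1), (n.choose j : ℝ) * Bell j := by
        gcongr with j hj
        rw [inv_pow, inv_mul_le_iff₀ (pow_pos (ratio_pos n) _)]
        exact cast_le_ratio_pow_mul (mem_range_succ_iff.mp hj)
    _ = ratio n * Bell n := by rw [← cast_succ_eq_ratio_mul, succ_eq_sum]; push_cast; rfl

theorem dobinskiWeight_succ_right (n : ℕ) {k : ℕ} (hk : k ≠ 0) :
    dobinskiWeight (n + 1) (k + 1) = dobinskiWeight (n + 1) k * ((1 + (k : ℝ)⁻¹) ^ n / k) := by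
  have hk : (k : ℝ) ≠ 0 := Nat.cast_ne_zero.mpr hk
  rw [show 1 + (k : ℝ)⁻¹ = (k + 1) / k by field_simp, dobinskiWeight, dobinskiWeight,
    Nat.factorial_succ]
  push_cast
  rw [div_pow]
  field_simp
  ring

/-- A minorant of `log ((1 + x⁻¹) ^ n / x)`, the logarithm of the ratio of the Dobinski weights of
order `n + 1` at `x + 1` and at `x`. It is a combination of `1, x, x⁻¹, x⁻²`, whose expectations are
quotients of Bell numbers, and it replaces `log x` by an upper bound that is sharp at `x = R`. -/
noncomputable def logRatioMinorant (n : ℕ) (R x : ℝ) : ℝ :=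
  n * (x⁻¹ - x⁻¹ ^ 2 / 2) -
    (log R + ((x / R - 1) / 3 + (1 - R * x⁻¹) - (1 - (R * x⁻¹) ^ 2) / 6))

theorem exp_logRatioMinorant_le (n : ℕ) {R x : ℝ} (hR : 0 < R) (hx : 0 < x) :
    exp (logRatioMinorant n R x) ≤ (1 + x⁻¹) ^ n / x := by
  have hlog : log x ≤ log R + ((x / R - 1) / 3 + (1 - R * x⁻¹) - (1 - (R * x⁻¹) ^ 2) / 6) := by
    have h := log_le_sub_one_div_three_add (div_pos hx hR)
    rw [log_div hx.ne' hR.ne', inv_div, div_eq_mul_inv R] at h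
    linarith
  rw [← le_log_iff_exp_le (by positivity), log_div (by positivity) hx.ne', log_pow,
    logRatioMinorant]
  gcongr
  exact sub_sq_div_two_le_log_one_add (inv_pos.mpr hx).le

theorem dobinskiWeight_mul_exp_le (n k : ℕ) {R : ℝ} (hR : 0 < R) :
    dobinskiWeight (n + 1) k * exp (logRatioMinorant n R k) ≤ dobinskiWeight (n + 1) (k + 1) := by
  rcases Nat.eq_zero_or_pos k with rfl | hk
  · simpa [dobinskiWeight] using dobinskiWeight_nonneg (n + 1) 1
  · rw [dobinskiWeight_succ_right n hk.ne']
    gcongr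
    · exact dobinskiWeight_nonneg _ _
    · exact exp_logRatioMinorant_le n hR (Nat.cast_pos.mpr hk)

theorem hasSum_dobinskiWeight_mul_logRatioMinorant {n : ℕ} (hn : n ≠ 0) :
    HasSum (fun k : ℕ => dobinskiWeight (n + 2) k * logRatioMinorant (n + 1) (ratio (n + 1)) k)
      ((n + 1) * ((ratio (n + 1))⁻¹ - (ratio (n + 1))⁻¹ * (ratio n)⁻¹ / 2) -
        (log (ratio (n + 1)) + (ratio (n + 2) / ratio (n + 1) - 1) / 3 +
          (ratio (n + 1) / ratio n - 1) / 6)) := by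
  set R := ratio (n + 1) with hR
  have hR₀ : 0 < R := ratio_pos (n + 1)
  have hinv : HasSum (fun k : ℕ => dobinskiWeight (n + 2) k * (k : ℝ)⁻¹) R⁻¹ := by
    simpa only [pow_one, hR, ratio, inv_div] using
      hasSum_dobinskiWeight_mul_inv_pow n.succ_ne_zero 1
  have hinv_sq : HasSum (fun k : ℕ => dobinskiWeight (n + 2) k * (k : ℝ)⁻¹ ^ 2)
      (R⁻¹ * (ratio n)⁻¹) := by
    have h := hasSum_dobinskiWeight_mul_inv_pow hn 2
    rwa [cast_succ_eq_ratio_mul (n + 1), cast_succ_eq_ratio_mul n, ← mul_assoc,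
      div_mul_cancel_right₀ (cast_pos n).ne', mul_inv] at h
  have h := (hasSum_dobinskiWeight (n + 2)).mul_left (-log R - 1 / 2) |>.add
    ((hasSum_dobinskiWeight_mul (n + 2)).mul_left (-R⁻¹ / 3)) |>.add
    (hinv.mul_left (n + 1 + R)) |>.add (hinv_sq.mul_left (-(n + 1) / 2 - R ^ 2 / 6))
  convert h.congr_fun fun k => ?_ using 1
  · rfl
  · field_simp
    ring
  · rw [logRatioMinorant]
    push_cast
    ring

theorem succ_mul_inv_ratio_sub_le {n : ℕ} (hn : n ≠ 0) :
    (n + 1) * ((ratio (n + 1))⁻¹ - (ratio (n + 1))⁻¹ * (ratio n)⁻¹ / 2) ≤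
      log (ratio (n + 1)) + (ratio (n + 2) / ratio (n + 1) - 1) / 3 +
          (ratio (n + 1) / ratio n - 1) / 6 -
        (2 * (ratio (n + 2) * (ratio (n + 3) - ratio (n + 2))) + 4 / 3)⁻¹ := by
  have h := le_neg_inv_of_mul_exp_le_succ (dobinskiWeight_nonneg (n + 2))
    (hasSum_dobinskiWeight (n + 2)) (hasSum_dobinskiWeight_mul (n + 2))
    (hasSum_dobinskiWeight_mul_sub_sq (n + 2)) (hasSum_dobinskiWeight_mul_logRatioMinorant hn)
    fun k => dobinskiWeight_mul_exp_le (n + 1) k (ratio_pos (n + 1))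
  linarith

theorem ratio_succ_div_ratio_sub_one_le (n : ℕ) :
    ratio (n + 1) / ratio n - 1 ≤ (n + 1 : ℝ)⁻¹ := by
  have h := monotone_succ_div_ratio n.le_succ
  simp only [Nat.succ_eq_add_one] at h
  rw [div_le_div_iff₀ (ratio_pos _) (ratio_pos _)] at h
  rw [div_sub_one (ratio_pos n).ne', inv_eq_one_div,
    div_le_div_iff₀ (ratio_pos _) n.cast_add_one_pos]
  push_cast at h
  linarith

theorem ratio_succ_mul_sub_le (n : ℕ) :
    ratio (n + 1) * (ratio (n + 2) - ratio (n + 1)) ≤ ratio n ^ 2 * ((n + 2) / (n + 1) ^ 2) := by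
  have hn := ratio_pos n
  have hn' := ratio_pos (n + 1)
  have hgrowth : ratio (n + 1) / ratio n ≤ 1 + (n + 1 : ℝ)⁻¹ := by
    linarith [ratio_succ_div_ratio_sub_one_le n]
  have hgrowth' : ratio (n + 2) / ratio (n + 1) - 1 ≤ (n + 2 : ℝ)⁻¹ := by
    refine (ratio_succ_div_ratio_sub_one_le (n + 1)).trans_eq ?_
    push_cast
    ring
  calc ratio (n + 1) * (ratio (n + 2) - ratio (n + 1))
      = ratio n ^ 2 * ((ratio (n + 1) / ratio n) ^ 2 * (ratio (n + 2) / ratio (n + 1) - 1)) := by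
        field_simp
    _ ≤ ratio n ^ 2 * ((1 + (n + 1 : ℝ)⁻¹) ^ 2 * (n + 2 : ℝ)⁻¹) := by
        gcongr
        exact sub_nonneg.mpr ((one_le_div hn').mpr (monotone_ratio (n + 1).le_succ))
    _ = ratio n ^ 2 * ((n + 2) / (n + 1) ^ 2) := by field_simp; ring

theorem succ_div_ratio_le_log_add_sub_inv {n : ℕ} (hn : n ≠ 0) :
    (n + 2) / ratio (n + 1) ≤ log (ratio (n + 1)) + (ratio (n + 1))⁻¹ +
      (n + 2) / (2 * ratio (n + 1) ^ 2) + (n + 2 : ℝ)⁻¹ / 3 + (n + 1 : ℝ)⁻¹ / 6 -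
      (2 * (ratio (n + 1) ^ 2 * ((n + 3) / (n + 2) ^ 2)) + 4 / 3)⁻¹ := by
  have hQ := ratio_pos n
  have hR := ratio_pos (n + 1)
  have hmain := succ_mul_inv_ratio_sub_le hn
  have hleft : (n + 2) / ratio (n + 1) - (ratio (n + 1))⁻¹ - (n + 2) / (2 * ratio (n + 1) ^ 2) ≤
      (n + 1) * ((ratio (n + 1))⁻¹ - (ratio (n + 1))⁻¹ * (ratio n)⁻¹ / 2) := by
    have h := monotone_succ_div_ratio n.le_succ
    push_cast at h
    have h' := mul_le_mul_of_nonneg_left h (inv_pos.mpr hR).le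
    field_simp at h' ⊢
    linarith
  have hthird : ratio (n + 2) / ratio (n + 1) - 1 ≤ (n + 2 : ℝ)⁻¹ := by
    refine (ratio_succ_div_ratio_sub_one_le (n + 1)).trans_eq ?_
    push_cast
    ring
  have hsixth := ratio_succ_div_ratio_sub_one_le n
  have hvariance : ratio (n + 2) * (ratio (n + 3) - ratio (n + 2)) ≤
      ratio (n + 1) ^ 2 * ((n + 3) / (n + 2) ^ 2) := by
    refine (ratio_succ_mul_sub_le (n + 1)).trans_eq ?_
    push_cast
    ring
  have hinv : (2 * (ratio (n + 1) ^ 2 * ((n + 3) / (n + 2) ^ 2)) + 4 / 3)⁻¹ ≤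
      (2 * (ratio (n + 2) * (ratio (n + 3) - ratio (n + 2))) + 4 / 3)⁻¹ := by
    have hnonneg := mul_nonneg (ratio_pos (n + 2)).le
      (sub_nonneg.mpr (monotone_ratio (n + 2).le_succ))
    gcongr (2 * ?_ + 4 / 3)⁻¹
  linarith

theorem succ_div_ratio_le_mul_log (n : ℕ) :
    (n + 1) / ratio n ≤ (1 + 1 / (2 * ratio n)) * log (1 + ratio n) := by
  have hR := ratio_pos n
  have hpow : (1 + (ratio n)⁻¹) ^ (n + 1) ≤ 1 + ratio n := by
    calc (1 + (ratio n)⁻¹) ^ (n + 1) ≤ ratio n * (1 + (ratio n)⁻¹) := by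
          rw [pow_succ]
          gcongr
          exact one_add_inv_ratio_pow_le n
      _ = 1 + ratio n := by field_simp; ring
  have hlog : (n + 1) * (2 / (2 * ratio n + 1)) ≤ log (1 + ratio n) := by
    calc (n + 1) * (2 / (2 * ratio n + 1))
        = (n + 1) * (2 * (ratio n)⁻¹ / ((ratio n)⁻¹ + 2)) := by field_simp; ring
      _ ≤ (n + 1) * log (1 + (ratio n)⁻¹) := by
          gcongr
          exact le_log_one_add_of_nonneg (inv_pos.mpr hR).le
      _ = log ((1 + (ratio n)⁻¹) ^ (n + 1)) := by rw [log_pow]; push_cast; ring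
      _ ≤ log (1 + ratio n) := log_le_log (by positivity) hpow
  calc (n + 1) / ratio n
      = (1 + 1 / (2 * ratio n)) * ((n + 1) * (2 / (2 * ratio n + 1))) := by field_simp
    _ ≤ (1 + 1 / (2 * ratio n)) * log (1 + ratio n) := by gcongr

theorem succ_div_ratio_le_log_add (n : ℕ) :
    (n + 1) / ratio n ≤ log (ratio n) + 8 / 7 * ((ratio n)⁻¹ + (n + 1 : ℝ)⁻¹) := by
  have hcrude := succ_div_ratio_le_mul_log n
  rcases le_or_gt (ratio n) 3 with hsmall | hlarge
  · exact div_le_log_add_of_le_three n.cast_add_one_pos (ratio_pos n) hsmall hcrude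
  · have hn : (2 : ℝ) < n := by linarith [ratio_le_add_one n]
    obtain ⟨m, rfl⟩ := Nat.exists_eq_succ_of_ne_zero (Nat.ne_zero_of_lt (Nat.ofNat_lt_cast.mp hn))
    have hm : 2 ≤ m := Nat.lt_succ_iff.mp (Nat.ofNat_lt_cast.mp hn)
    have hm_cast : (2 : ℝ) ≤ m := Nat.ofNat_le_cast.mpr hm
    have hrefined := succ_div_ratio_le_log_add_sub_inv (Nat.ne_zero_of_lt hm)
    have hN : ((m + 1 : ℕ) : ℝ) + 1 = m + 2 := by push_cast; ring
    rw [hN] at hcrude ⊢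
    refine div_le_log_add_of_three_le (by linarith) hlarge.le hcrude ?_
    rwa [show (m + 2 + 1 : ℝ) = m + 3 by ring, show (m + 2 - 1 : ℝ) = m + 1 by ring]

end Bell

theorem stmt_10 (n : ℕ) (hn : 1 ≤ n) :
    |(Bell n : ℝ) / (Bell (n - 1) : ℝ) - Real.exp (lambertW n)| ≤ 8 / 7 * (1 / lambertW n) := by
  obtain ⟨k, rfl⟩ := Nat.exists_eq_add_of_le' hn
  have hk : (0 : ℝ) < k + 1 := k.cast_add_one_pos
  have hR := Bell.ratio_pos k
  have hupper : Bell.ratio k ≤ exp (lambertW (k + 1)) :=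
    le_exp_lambertW hk hR ((log_le_iff_le_exp hR).mpr (Bell.ratio_le_exp k))
  have hlower : exp (lambertW (k + 1)) - Bell.ratio k ≤ 8 / 7 * (1 / lambertW (k + 1)) :=
    exp_lambertW_sub_le hk hR (Bell.succ_div_ratio_le_log_add k)
  rw [abs_sub_comm, Nat.add_sub_cancel, Nat.cast_add_one]
  exact (abs_of_nonneg (sub_nonneg.mpr hupper)).trans_le hlower
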